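/- Let p, n be positive integers, let λ ≥ μ ≥ 0 and l ≥ 0 be real numbers, and suppose that either λ − μ ≥ (l+p)/(2p) or λ = μ = 0. For integers k ≥ 2 define B_k = (p+l)/((k+n−2)(λμ(k+n+p−2)+λ−μ)+p+l). Then for every integer k ≥ 2 one has B_{k+1} − B_{k+2} ≥ 0 and B_k − 2B_{k+1} + B_{k+2} ≥ 0; that is, the sequence {B_k}_{k≥2} is decreasing and convex. -/

import Mathlib

/-- The sequence `B_k = (p+l)/((k+n-2)(λμ(k+n+p-2)+λ-μ)+p+l)` from Lemma 2.3. -/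
noncomputable def Bseq (p n : ℕ) (lam mu l : ℝ) (k : ℕ) : ℝ :=
  ((p : ℝ) + l) /
    (((k : ℝ) + n - 2) * (lam * mu * ((k : ℝ) + n + p - 2) + lam - mu) + p + l)

theorem stmt0 (p n : ℕ) (hp : 0 < p) (hn : 0 < n) (lam mu l : ℝ)
    (hmu : 0 ≤ mu) (hlm : mu ≤ lam) (hl : 0 ≤ l)
    (hcase : (l + p) / (2 * p) ≤ lam - mu ∨ (lam = 0 ∧ mu = 0)) :
    ∀ k : ℕ, 2 ≤ k →
      0 ≤ Bseq p n lam mu l (k + 1) - Bseq p n lam mu l (k + 2) ∧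
      0 ≤ Bseq p n lam mu l k - 2 * Bseq p n lam mu l (k + 1) +
          Bseq p n lam mu l (k + 2) := by
  intro k hk
  have hp' : (1:ℝ) ≤ p := by exact_mod_cast hp
  have hn' : (1:ℝ) ≤ n := by exact_mod_cast hn
  have hk' : (2:ℝ) ≤ k := by exact_mod_cast hk
  have ha : 0 ≤ lam * mu := mul_nonneg (hmu.trans hlm) hmu
  have hd : 0 ≤ lam - mu := by linarith
  have hc : 0 < (p:ℝ) + l := by linarith
  have key : lam * mu * (p + l) ≤ lam * mu * (2 * p * (lam - mu)) := by
    rcases hcase with h | ⟨h1, h2⟩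
    · rw [div_le_iff₀ (by linarith)] at h
      exact mul_le_mul_of_nonneg_left (by linarith) ha
    · simp [h1]
  unfold Bseq
  push_cast
  obtain ⟨m, hm⟩ : ∃ m : ℝ, m = (k:ℝ) + n - 2 := ⟨_, rfl⟩
  have hm1 : 1 ≤ m := by linarith
  obtain ⟨a, hae⟩ : ∃ a, a = lam * mu := ⟨_, rfl⟩
  obtain ⟨d, hde⟩ : ∃ d, d = lam - mu := ⟨_, rfl⟩
  obtain ⟨c, hce⟩ : ∃ c, c = (p:ℝ) + l := ⟨_, rfl⟩
  obtain ⟨b, hbe⟩ : ∃ b, b = a * p + d := ⟨_, rfl⟩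
  have e0 : ((k:ℝ) + n - 2) * (lam * mu * ((k : ℝ) + n + p - 2) + lam - mu) + p + l
      = a * m ^ 2 + b * m + c := by
    rw [hbe, hce, hae, hde, hm]; ring
  have e1 : ((k:ℝ) + 1 + n - 2) * (lam * mu * ((k : ℝ) + 1 + n + p - 2) + lam - mu) + p + l
      = a * (m + 1) ^ 2 + b * (m + 1) + c := by
    rw [hbe, hce, hae, hde, hm]; ring
  have e2 : ((k:ℝ) + 2 + n - 2) * (lam * mu * ((k : ℝ) + 2 + n + p - 2) + lam - mu) + p + l
      = a * (m + 2) ^ 2 + b * (m + 2) + c := by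
    rw [hbe, hce, hae, hde, hm]; ring
  rw [e0, e1, e2]
  rw [← hae, ← hde, ← hce] at key
  rw [← hae] at ha
  rw [← hde] at hd
  rw [← hce] at hc ⊢
  have hb : 0 ≤ b := by rw [hbe]; positivity
  have hm0 : 0 ≤ m := by linarith
  have hbb : a * c ≤ b ^ 2 := by
    rw [hbe]; nlinarith [sq_nonneg (a * p), sq_nonneg d]
  have p0 : 0 < a * m ^ 2 + b * m + c := by positivity
  have p1 : 0 < a * (m + 1) ^ 2 + b * (m + 1) + c := by positivity
  have p2 : 0 < a * (m + 2) ^ 2 + b * (m + 2) + c := by positivity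
  constructor
  · rw [sub_nonneg]
    apply div_le_div_of_nonneg_left hc.le p1
    nlinarith [mul_nonneg ha hm0]
  · have : c / (a * m ^ 2 + b * m + c) - 2 * (c / (a * (m + 1) ^ 2 + b * (m + 1) + c))
        + c / (a * (m + 2) ^ 2 + b * (m + 2) + c)
        = c * (2 * (3 * a ^ 2 * ((m + 1) ^ 2 - 1) + 2 * a ^ 2 + 3 * a * b * (m + 1)
            + (b ^ 2 - a * c))) /
          ((a * m ^ 2 + b * m + c) * (a * (m + 1) ^ 2 + b * (m + 1) + c)
            * (a * (m + 2) ^ 2 + b * (m + 2) + c)) := by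
      rw [eq_div_iff (by positivity)]
      field_simp
      ring
    rw [this]
    have h1 : 0 ≤ b ^ 2 - a * c := by linarith
    have h2 : 0 ≤ (m + 1) ^ 2 - 1 := by nlinarith
    positivity
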